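/- For 1 ≤ x ≤ n let S_x ∈ Mat_{d_x×d_{x−1}}(ℂ) be the 0–1 matrix with (S_x)_{y,y} = 1 for 0 ≤ y < min(d_{x−1}, d_x) and all other entries 0. Then the GL_d-orbit of (S_1,…,S_n) is Zariski-dense in Rep_d; equivalently, vanishingIdeal(GL_d-orbit of (S_1,…,S_n)) = 0. -/

import Mathlib

open Finset Matrix

noncomputable section

/-- The representation space `Rep_d = ∏_{i=1}^n Mat_{d_i × d_{i-1}}(ℂ)`. -/
abbrev RepSp (n : ℕ) (d : ℕ → ℕ) := ∀ i : Fin n, Matrix (Fin (d (i.val+1))) (Fin (d i.val)) ℂ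

/-- The product `A_m · A_{m-1} ⋯ A_1` of the first `m` matrices (over any commutative ring);
for `m = 0` it is the identity. -/
def chainProd {S : Type} [CommRing S] (n : ℕ) (d : ℕ → ℕ)
    (A : ∀ i : Fin n, Matrix (Fin (d (i.val+1))) (Fin (d i.val)) S) :
    (m : ℕ) → m ≤ n → Matrix (Fin (d m)) (Fin (d 0)) S
  | 0, _ => 1
  | m+1, h => A ⟨m, h⟩ * chainProd n d A m (Nat.le_of_succ_le h)

/-- `Σ_d`: the set of tuples of matrices whose total product `A_n ⋯ A_1` vanishes. -/
def SigmaD (n : ℕ) (d : ℕ → ℕ) : Set (RepSp n d) := {A | chainProd n d A n le_rfl = 0}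

/-- The group `GL_d = ∏_{i=0}^n GL(d_i, ℂ)`. -/
abbrev GLd (n : ℕ) (d : ℕ → ℕ) := ∀ j : Fin (n+1), GL (Fin (d j.val)) ℂ

/-- The `GL_d`-orbit of a point of `Rep_d`, for the action
`(g_0,…,g_n) · (A_1,…,A_n) = (g_1 A_1 g_0⁻¹, …, g_n A_n g_{n-1}⁻¹)`. -/
def orbit (n : ℕ) (d : ℕ → ℕ) (A : RepSp n d) : Set (RepSp n d) :=
  {B | ∃ g : GLd n d, ∀ i : Fin n,
    B i = ((g ⟨i.val+1, Nat.succ_lt_succ i.isLt⟩ : GL (Fin (d (i.val+1))) ℂ) :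
        Matrix (Fin (d (i.val+1))) (Fin (d (i.val+1))) ℂ) * A i *
      (((g ⟨i.val, Nat.lt_succ_of_lt i.isLt⟩)⁻¹ : GL (Fin (d i.val)) ℂ) :
        Matrix (Fin (d i.val)) (Fin (d i.val)) ℂ)}

/-- The coordinate ring `R` of `Rep_d`: a polynomial ring with one variable for each
entry of each of the `n` matrices. -/
abbrev CoordRing (n : ℕ) (d : ℕ → ℕ) :=
  MvPolynomial (Σ i : Fin n, Fin (d (i.val+1)) × Fin (d i.val)) ℂ

/-- The matrices `X_i` of variables. -/
def Xmat (n : ℕ) (d : ℕ → ℕ) :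
    ∀ i : Fin n, Matrix (Fin (d (i.val+1))) (Fin (d i.val)) (CoordRing n d) :=
  fun i r c => MvPolynomial.X ⟨i, (r, c)⟩

/-- The ideal `I ⊆ R` generated by the entries of the product `X_n · X_{n-1} ⋯ X_1`. -/
def prodIdeal (n : ℕ) (d : ℕ → ℕ) : Ideal (CoordRing n d) :=
  Ideal.span {f | ∃ r c, f = chainProd n d (Xmat n d) n le_rfl r c}

/-- The coordinates of a point of `Rep_d`. -/
def coords (n : ℕ) (d : ℕ → ℕ) (A : RepSp n d) :
    (Σ i : Fin n, Fin (d (i.val+1)) × Fin (d i.val)) → ℂ :=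
  fun q => A q.1 q.2.1 q.2.2

/-- The ideal of polynomials vanishing on a subset of `Rep_d`. -/
def vanishingIdeal (n : ℕ) (d : ℕ → ℕ) (S : Set (RepSp n d)) : Ideal (CoordRing n d) where
  carrier := {f | ∀ A ∈ S, MvPolynomial.eval (coords n d A) f = 0}
  add_mem' := fun hf hg A hA => by simp [map_add, hf A hA, hg A hA]
  zero_mem' := fun A hA => by simp
  smul_mem' := fun c f hf A hA => by
    simp only [smul_eq_mul, _root_.map_mul, hf A hA, mul_zero]

/-- The (Krull) height of an ideal: the infimum of the heights (in the sense of
`Order.height` on the prime spectrum) of the primes containing it. -/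
def heightI {A : Type*} [CommRing A] (I : Ideal A) : ℕ∞ :=
  sInf {h | ∃ p : PrimeSpectrum A, I ≤ p.asIdeal ∧ Order.height p = h}

/-- The minimal height among the minimal primes of `I`, i.e. the codimension of the
maximal-dimensional irreducible components of `Σ_d`. -/
def minHt (n : ℕ) (d : ℕ → ℕ) : ℕ∞ :=
  sInf {h | ∃ P ∈ (prodIdeal n d).minimalPrimes, heightI P = h}

/-- The minimal primes of `I` whose height is the minimal one, i.e. the
maximal-dimensional irreducible components of `Σ_d`. -/
def minComponents (n : ℕ) (d : ℕ → ℕ) : Set (Ideal (CoordRing n d)) :=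
  {P ∈ (prodIdeal n d).minimalPrimes | heightI P = minHt n d}

/-- The tuple `(S_1,…,S_n)` of 0–1 matrices with `(S_x)_{y,y} = 1` for
`y < min(d_{x-1}, d_x)` and all other entries `0`. -/
def repOpen (n : ℕ) (d : ℕ → ℕ) : RepSp n d :=
  fun _ r c => if (r : ℕ) = (c : ℕ) then 1 else 0

/-- The rectangular identity. -/
def Sm (p q : ℕ) : Matrix (Fin p) (Fin q) ℂ := fun r c => if (r : ℕ) = (c : ℕ) then 1 else 0

theorem Sm_mul {p q k : ℕ} (B : Matrix (Fin q) (Fin k) ℂ) (r : Fin p) (c : Fin k) :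
    (Sm p q * B) r c = if h : (r : ℕ) < q then B ⟨r, h⟩ c else 0 := by
  rw [Matrix.mul_apply]
  split_ifs with h
  · rw [Finset.sum_eq_single ⟨r, h⟩]
    · simp [Sm]
    · intro x _ hx
      have : ¬ (r : ℕ) = x := fun h' => hx (Fin.ext h'.symm)
      simp [Sm, this]
    · simp
  · apply Finset.sum_eq_zero
    intro x _
    have : ¬ (r : ℕ) = x := by omega
    simp [Sm, this]

theorem mul_Sm {p q k : ℕ} (B : Matrix (Fin k) (Fin p) ℂ) (r : Fin k) (c : Fin q) :
    (B * Sm p q) r c = if h : (c : ℕ) < p then B r ⟨c, h⟩ else 0 := by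
  rw [Matrix.mul_apply]
  split_ifs with h
  · rw [Finset.sum_eq_single ⟨c, h⟩]
    · simp [Sm]
    · intro x _ hx
      have : ¬ (x : ℕ) = c := fun h' => hx (Fin.ext h')
      simp [Sm, this]
    · simp
  · apply Finset.sum_eq_zero
    intro x _
    have : ¬ (x : ℕ) = c := by omega
    simp [Sm, this]

/-- Upper unitriangular matrices. -/
def Unitri {p : ℕ} (b : Matrix (Fin p) (Fin p) ℂ) : Prop :=
  (∀ r c, c < r → b r c = 0) ∧ ∀ r, b r r = 1

theorem Unitri.det {p : ℕ} {b : Matrix (Fin p) (Fin p) ℂ} (hb : Unitri b) : b.det = 1 := by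
  rw [Matrix.det_of_isUpperTriangular]
  · simp [hb.2]
  · intro r c h
    exact hb.1 r c h

theorem Unitri.exists_GL {p : ℕ} {b : Matrix (Fin p) (Fin p) ℂ} (hb : Unitri b) :
    ∃ g : GL (Fin p) ℂ, (g : Matrix (Fin p) (Fin p) ℂ) = b :=
  ⟨Matrix.GeneralLinearGroup.mkOfDetNeZero b (by rw [hb.det]; exact one_ne_zero), rfl⟩

theorem step_back {p q : ℕ} {b : Matrix (Fin p) (Fin p) ℂ} (hb : Unitri b) :
    ∃ b' : Matrix (Fin q) (Fin q) ℂ, Unitri b' ∧ b * Sm p q = Sm p q * b' := by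
  let b' : Matrix (Fin q) (Fin q) ℂ := fun r c =>
    if h : (r : ℕ) < p ∧ (c : ℕ) < p then b ⟨r, h.1⟩ ⟨c, h.2⟩ else
      if r = c then 1 else 0
  refine ⟨b', ⟨?_, ?_⟩, ?_⟩
  · intro r c h
    simp only [b']
    split_ifs with h1 h2
    · exact hb.1 _ _ h
    · exact absurd h2 h.ne'
    · rfl
  · intro r
    simp only [b', if_true]
    split_ifs with h1
    · exact hb.2 _
    · rfl
  · ext r c
    rw [mul_Sm, Sm_mul]
    have hr := r.2
    have hc := c.2
    by_cases h1 : (c : ℕ) < p <;> by_cases h2 : (r : ℕ) < q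
    · simp [b', h1, h2]
    · simp only [h1, h2, dif_pos, dif_neg, not_false_eq_true]
      exact hb.1 _ _ (by rw [Fin.lt_def]; simp; omega)
    · have : ¬ (r : ℕ) = c := by omega
      simp [b', h1, h2, Fin.ext_iff, this]
    · simp [h1, h2]

theorem extend_back (d : ℕ → ℕ) (m : ℕ) : ∀ b : GL (Fin (d m)) ℂ, Unitri b.1 →
    ∃ h : ∀ j, GL (Fin (d j)) ℂ, h m = b ∧
      ∀ i < m, (h (i+1)).1 * Sm (d (i+1)) (d i) = Sm (d (i+1)) (d i) * (h i).1 := by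
  induction m with
  | zero =>
    intro b _
    exact ⟨Function.update (fun _ => 1) 0 b, by simp, by simp⟩
  | succ m ih =>
    intro b hb
    obtain ⟨b', hb', hbb⟩ := step_back (q := d m) hb
    obtain ⟨g, rfl⟩ := hb'.exists_GL
    obtain ⟨h, hm, hi⟩ := ih g hb'
    refine ⟨Function.update h (m+1) b, by simp, ?_⟩
    intro i hlt
    rw [Function.update_of_ne (by omega : i ≠ m + 1)]
    rcases Nat.lt_succ_iff_lt_or_eq.mp hlt with h' | rfl
    · rw [Function.update_of_ne (by omega : i + 1 ≠ m + 1)]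
      exact hi i h'
    · rw [Function.update_self, hm]
      exact hbb

/-- The matrix with columns those of `M`, completed by standard basis vectors. -/
def Pm {p q : ℕ} (M : Matrix (Fin p) (Fin q) ℂ) : Matrix (Fin p) (Fin p) ℂ :=
  fun r c => if h : (c : ℕ) < q then M r ⟨c, h⟩ else if r = c then 1 else 0

theorem factor {p q : ℕ} (M : Matrix (Fin p) (Fin q) ℂ) (hM : (Pm M).det ≠ 0) :
    ∃ (P : GL (Fin p) ℂ) (b : GL (Fin q) ℂ), Unitri b.1 ∧ M = P.1 * Sm p q * b.1 := by
  have hu : IsUnit (Pm M).det := isUnit_iff_ne_zero.mpr hM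
  have hcol : ∀ (r : Fin p) (c : Fin q) (h : (c : ℕ) < p),
      ((Pm M)⁻¹ * M) r c = if (r : ℕ) = c then 1 else 0 := by
    intro r c h
    have h1 : ((Pm M)⁻¹ * M) r c = ((Pm M)⁻¹ * Pm M) r ⟨c, h⟩ := by
      simp [Matrix.mul_apply, Pm]
    rw [h1, Matrix.nonsing_inv_mul _ hu, Matrix.one_apply]
    simp [Fin.ext_iff]
  let b : Matrix (Fin q) (Fin q) ℂ := fun r c =>
    if h : (r : ℕ) < p then ((Pm M)⁻¹ * M) ⟨r, h⟩ c else if r = c then 1 else 0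
  have hb : Unitri b := by
    refine ⟨fun r c h => ?_, fun r => ?_⟩
    · simp only [b]
      rw [Fin.lt_def] at h
      split_ifs with h1 h2
      · rw [hcol _ _ (by omega)]
        simp; omega
      · rw [h2] at h; omega
      · rfl
    · simp only [b]
      split_ifs with h1
      · rw [hcol _ _ h1]; simp
      · rfl
  obtain ⟨g, hg⟩ := hb.exists_GL
  refine ⟨Matrix.GeneralLinearGroup.mkOfDetNeZero _ hM, g, hg ▸ hb, ?_⟩
  have key : Sm p q * b = (Pm M)⁻¹ * M := by
    ext r c
    rw [Sm_mul]
    split_ifs with h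
    · simp [b]
    · rw [hcol r c (by omega), if_neg (by omega)]
  rw [hg, Matrix.mul_assoc, key]
  change M = Pm M * _
  rw [Matrix.mul_nonsing_inv_cancel_left _ _ hu]

theorem dense_E (p q : ℕ) : Dense {M : Matrix (Fin p) (Fin q) ℂ | (Pm M).det ≠ 0} := by
  intro M
  let L : ℂ → Matrix (Fin p) (Fin q) ℂ := fun t => (1 - t) • M + t • Sm p q
  have hL : Continuous L := by fun_prop
  let Q : Polynomial ℂ := ((1 - Polynomial.X : Polynomial ℂ) • (Pm M).map Polynomial.C +
    (Polynomial.X : Polynomial ℂ) • (1 : Matrix (Fin p) (Fin p) (Polynomial ℂ))).det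
  have hQ : ∀ t, Q.eval t = (Pm (L t)).det := by
    intro t
    rw [← Polynomial.coe_evalRingHom, RingHom.map_det]
    congr 1
    ext r c
    simp only [RingHom.mapMatrix_apply, Matrix.map_apply, Matrix.add_apply, Matrix.smul_apply,
      Pm, L, Sm, Matrix.one_apply, smul_eq_mul, Polynomial.coe_evalRingHom]
    by_cases h : (c : ℕ) < q <;> by_cases h2 : r = c <;> simp [h, h2]
    simp [Fin.ext_iff] at h2
    simp [h2]
  have hQ0 : Q ≠ 0 := by
    intro h0
    have h1 := hQ 1
    have h2 : Pm (L 1) = 1 := by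
      ext r c
      by_cases h : (c : ℕ) < q <;> simp [Pm, L, Sm, h, Matrix.one_apply, Fin.ext_iff]
    rw [h0, h2] at h1
    simp at h1
  have hd : Dense {t | Q.eval t ≠ 0} := by
    have : {t | Q.eval t ≠ 0} = (Q.rootSet ℂ)ᶜ := by
      ext t
      simp [Polynomial.mem_rootSet, hQ0]
    rw [this]
    exact (Q.rootSet_finite ℂ).countable.dense_compl ℂ
  have h0 : M = L 0 := by simp [L]
  rw [h0]
  refine closure_mono ?_ (hL.range_subset_closure_image_dense hd ⟨0, rfl⟩)
  rintro _ ⟨t, ht, rfl⟩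
  change (Pm (L t)).det ≠ 0
  rw [← hQ]
  exact ht

theorem dense_D (d : ℕ → ℕ) (m : ℕ) :
    Dense {A : ∀ i : ℕ, Matrix (Fin (d (i+1))) (Fin (d i)) ℂ |
      ∃ g : ∀ j, GL (Fin (d j)) ℂ, ∀ i < m,
        A i = (g (i+1)).1 * Sm (d (i+1)) (d i) * ((g i)⁻¹).1} := by
  induction m with
  | zero => simp
  | succ m ih =>
    rw [dense_iff_inter_open] at ih ⊢
    intro U hU hne
    obtain ⟨B, hBU, g, hg⟩ := ih U hU hne
    have hsurj : Function.Surjective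
        (fun M : Matrix (Fin (d (m+1))) (Fin (d m)) ℂ => M * ((g m)⁻¹).1) := by
      intro N
      refine ⟨N * (g m).1, ?_⟩
      change N * (g m).1 * ((g m)⁻¹).1 = N
      rw [Matrix.mul_assoc, Units.mul_inv, Matrix.mul_one]
    have hD := hsurj.denseRange.dense_image (by fun_prop) (dense_E (d (m+1)) (d m))
    have hcont : Continuous (fun M : Matrix (Fin (d (m+1))) (Fin (d m)) ℂ =>
      Function.update B m M) := continuous_const.update m continuous_id
    obtain ⟨_, hMU, M, hM, rfl⟩ := hD.inter_open_nonempty _ (hU.preimage hcont)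
      ⟨B m, by simpa using hBU⟩
    obtain ⟨P, b, hb, hPb⟩ := factor M hM
    obtain ⟨h, hm, hi⟩ := extend_back d m b hb
    refine ⟨Function.update B m (M * ((g m)⁻¹).1), hMU, Function.update (fun j => g j * (h j)⁻¹) (m+1) P, ?_⟩
    intro i hlt
    rw [Function.update_of_ne (by omega : i ≠ m + 1)]
    rcases Nat.lt_succ_iff_lt_or_eq.mp hlt with h' | rfl
    · rw [Function.update_of_ne (by omega : i + 1 ≠ m + 1), Function.update_of_ne (by omega : i ≠ m),
        hg i h', _root_.mul_inv_rev, inv_inv]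
      have e : Sm (d (i+1)) (d i) = ((h (i+1))⁻¹).1 * (Sm (d (i+1)) (d i) * (h i).1) := by
        rw [← hi i h', ← Matrix.mul_assoc, Units.inv_mul, Matrix.one_mul]
      conv_lhs => rw [e]
      simp only [Units.val_mul, Matrix.mul_assoc]
    · rw [Function.update_self, Function.update_self, _root_.mul_inv_rev, inv_inv, hm, hPb]
      simp only [Units.val_mul, Matrix.mul_assoc]

theorem dense_orbit (n : ℕ) (d : ℕ → ℕ) : Dense (orbit n d (repOpen n d)) := by
  let ρ : (∀ i : ℕ, Matrix (Fin (d (i+1))) (Fin (d i)) ℂ) → RepSp n d := fun A i => A i.val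
  have hρ : Continuous ρ := continuous_pi fun i => continuous_apply i.val
  have hs : Function.Surjective ρ := by
    intro A
    refine ⟨fun i => if h : i < n then A ⟨i, h⟩ else 0, ?_⟩
    funext i
    simp [ρ]
  refine (hs.denseRange.dense_image hρ (dense_D d n)).mono ?_
  rintro _ ⟨A, ⟨g, hg⟩, rfl⟩
  exact ⟨fun j => g j.val, fun i => hg i.val i.isLt⟩

/-- The `GL_d`-orbit of `(S_1,…,S_n)` is Zariski-dense in `Rep_d`:
its vanishing ideal is zero. -/
theorem statement14 (n : ℕ) (hn : 1 ≤ n) (d : ℕ → ℕ) (hd : ∀ i, i ≤ n → 0 < d i) :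
    vanishingIdeal n d (orbit n d (repOpen n d)) = ⊥ := by
  rw [eq_bot_iff]
  intro f hf
  rw [Ideal.mem_bot]
  have hc : Continuous (fun A : RepSp n d => MvPolynomial.eval (coords n d A) f) := by
    refine (MvPolynomial.continuous_eval f).comp (continuous_pi fun q => ?_)
    exact ((continuous_apply q.1).matrix_elem q.2.1 q.2.2)
  have h0 : (fun A : RepSp n d => MvPolynomial.eval (coords n d A) f) = fun _ => 0 :=
    hc.ext_on (dense_orbit n d) continuous_const fun A hA => hf A hA
  apply MvPolynomial.funext
  intro x
  rw [map_zero]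
  exact congrFun h0 (fun i r c => x ⟨i, (r, c)⟩)
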